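/- For all positive semidefinite n×n complex matrices A and B, tr(|AB|^{1/2}) ≤ (tr(A) · tr(B))^{1/2} ≤ (1/2)(tr(A) + tr(B)). -/

import Mathlib

open scoped ComplexOrder

/-- The absolute value `|Z| = (Zᴴ Z)^(1/2)` of a square complex matrix. -/
noncomputable def matAbs {n : ℕ} (Z : Matrix (Fin n) (Fin n) ℂ) : Matrix (Fin n) (Fin n) ℂ :=
  (Matrix.posSemidef_conjTranspose_mul_self Z).isHermitian.cfc Real.sqrt

/-- Real powers of a positive semidefinite (in particular, Hermitian) matrix, obtained by
applying `t ↦ t ^ r` to the eigenvalues; junk value `0` on non-Hermitian matrices. -/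
noncomputable def matRpow {n : ℕ} (A : Matrix (Fin n) (Fin n) ℂ) (r : ℝ) :
    Matrix (Fin n) (Fin n) ℂ :=
  if hA : A.IsHermitian then hA.cfc (fun t => t ^ r) else 0

/-
If `v i` and `u i` are the right and left singular vectors of `A * B`, with `A B (v i) = s i • u i`,
then two applications of Cauchy–Schwarz, for the form `⟪x, A y⟫` at `u i, B (v i)` and for the form
`⟪x, B y⟫` at `u i, v i`, give
`s i ≤ ⟪u i, A (u i)⟫ * √(⟪u i, B (u i)⟫ * ⟪v i, B (v i)⟫)`.
Taking square roots and summing, Cauchy–Schwarz for sums bounds `∑ i, √(s i)` by `√(tr A * tr B)`,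
because a trace can be computed in either of the orthonormal bases `u` and `v`.
-/

section PositiveOperators

open Module InnerProductSpace
open RCLike (re)

variable {𝕜 E F : Type*} [RCLike 𝕜] [NormedAddCommGroup E] [InnerProductSpace 𝕜 E]
  [NormedAddCommGroup F] [InnerProductSpace 𝕜 F]

theorem norm_inner_apply_sq_le_of_isPositive {a : E →ₗ[𝕜] E} (ha : a.IsPositive) (x y : E) :
    ‖⟪x, a y⟫_𝕜‖ ^ 2 ≤ re ⟪x, a x⟫_𝕜 * re ⟪y, a y⟫_𝕜 := by
  let form : PreInnerProductSpace.Core 𝕜 E :=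
    { inner := fun x y => ⟪x, a y⟫_𝕜
      conj_inner_symm := fun x y => by rw [inner_conj_symm, ha.isSymmetric]
      re_inner_nonneg := ha.re_inner_nonneg_right
      add_left := fun x y z => inner_add_left x y (a z)
      smul_left := fun x y r => inner_smul_left x (a y) r }
  have symm : ‖⟪y, a x⟫_𝕜‖ = ‖⟪x, a y⟫_𝕜‖ := by rw [norm_inner_symm, ha.isSymmetric]
  have cauchy_schwarz : ‖⟪x, a y⟫_𝕜‖ * ‖⟪y, a x⟫_𝕜‖ ≤ _ :=
    InnerProductSpace.Core.inner_mul_inner_self_le (c := form) x y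
  rwa [symm, ← sq] at cauchy_schwarz

theorem le_re_inner_mul_sqrt_of_apply_apply_eq_smul {a b : E →ₗ[𝕜] E} (ha : a.IsPositive)
    (hb : b.IsPositive) {s : ℝ} (hs : 0 ≤ s) {u v : E} (hu : ‖u‖ = 1)
    (h : a (b v) = (s : 𝕜) • u) :
    s ≤ re ⟪u, a u⟫_𝕜 * (√(re ⟪u, b u⟫_𝕜) * √(re ⟪v, b v⟫_𝕜)) := by
  have inner_b_le : ‖⟪u, b v⟫_𝕜‖ ≤ √(re ⟪u, b u⟫_𝕜) * √(re ⟪v, b v⟫_𝕜) := by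
    rw [← Real.sqrt_mul (hb.re_inner_nonneg_right u)]
    exact Real.le_sqrt_of_sq_le (norm_inner_apply_sq_le_of_isPositive hb u v)
  have inner_ab : ‖⟪u, a (b v)⟫_𝕜‖ = s := by
    rw [h, inner_smul_right, inner_self_eq_norm_sq_to_K, hu]
    simp [abs_of_nonneg hs]
  have inner_bab : re ⟪b v, a (b v)⟫_𝕜 ≤ s * ‖⟪u, b v⟫_𝕜‖ := by
    rw [h, inner_smul_right, RCLike.re_ofReal_mul, norm_inner_symm]
    exact mul_le_mul_of_nonneg_left (RCLike.re_le_norm _) hs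
  have sq_le : s * s ≤ s * (re ⟪u, a u⟫_𝕜 * (√(re ⟪u, b u⟫_𝕜) * √(re ⟪v, b v⟫_𝕜))) :=
    calc s * s = ‖⟪u, a (b v)⟫_𝕜‖ ^ 2 := by rw [inner_ab, sq]
      _ ≤ re ⟪u, a u⟫_𝕜 * re ⟪b v, a (b v)⟫_𝕜 :=
        norm_inner_apply_sq_le_of_isPositive ha u (b v)
      _ ≤ re ⟪u, a u⟫_𝕜 * (s * (√(re ⟪u, b u⟫_𝕜) * √(re ⟪v, b v⟫_𝕜))) :=
        mul_le_mul_of_nonneg_left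
          (inner_bab.trans (mul_le_mul_of_nonneg_left inner_b_le hs)) (ha.re_inner_nonneg_right u)
      _ = _ := mul_left_comm _ _ _
  rcases hs.eq_or_lt with rfl | s_pos
  · exact mul_nonneg (ha.re_inner_nonneg_right u) (by positivity)
  · exact le_of_mul_le_mul_left sq_le s_pos

variable [FiniteDimensional 𝕜 E] [FiniteDimensional 𝕜 F] {n : ℕ}

theorem exists_orthonormalBasis_inner_apply_apply (T : E →ₗ[𝕜] F) (hE : finrank 𝕜 E = n) :
    ∃ v : OrthonormalBasis (Fin n) 𝕜 E, ∀ i j,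
      ⟪T (v i), T (v j)⟫_𝕜 = if i = j then (T.singularValues j : 𝕜) ^ 2 else 0 := by
  let v := T.isSymmetric_adjoint_comp_self.eigenvectorBasis hE
  refine ⟨v, fun i j => ?_⟩
  have adjoint_apply : T.adjoint (T (v j)) = ((T.singularValues j ^ 2 : ℝ) : 𝕜) • v j := by
    rw [T.sq_singularValues_fin hE]
    exact T.isSymmetric_adjoint_comp_self.apply_eigenvectorBasis hE j
  rw [← LinearMap.adjoint_inner_right, adjoint_apply, inner_smul_right,
    orthonormal_iff_ite.mp v.orthonormal, mul_ite, mul_one, mul_zero, RCLike.ofReal_pow]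

theorem exists_singular_value_decomposition (T : E →ₗ[𝕜] F) (hE : finrank 𝕜 E = n)
    (hF : finrank 𝕜 F = n) :
    ∃ (v : OrthonormalBasis (Fin n) 𝕜 E) (u : OrthonormalBasis (Fin n) 𝕜 F),
      ∀ i, T (v i) = (T.singularValues i : 𝕜) • u i := by
  obtain ⟨v, inner_T⟩ := exists_orthonormalBasis_inner_apply_apply T hE
  let w (i : Fin n) : F := (T.singularValues i : 𝕜)⁻¹ • T (v i)
  have orthonormal_w : Orthonormal 𝕜 ({i : Fin n | T.singularValues i ≠ 0}.domRestrict w) := by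
    rw [orthonormal_iff_ite]
    rintro ⟨i, hi : T.singularValues i ≠ 0⟩ ⟨j, hj⟩
    have hi' : (T.singularValues i : 𝕜) ≠ 0 := RCLike.ofReal_ne_zero.mpr hi
    simp only [Set.domRestrict_apply, w, inner_smul_left, inner_smul_right, inner_T,
      Subtype.mk.injEq, map_inv₀, RCLike.conj_ofReal]
    split_ifs with hij
    · subst hij
      field_simp
    · simp only [mul_zero]
  obtain ⟨u, hu⟩ := orthonormal_w.exists_orthonormalBasis_extension_of_card_eq
    (hF.trans (Fintype.card_fin n).symm)
  refine ⟨v, u, fun i => ?_⟩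
  by_cases hi : T.singularValues i = 0
  · have inner_self : ⟪T (v i), T (v i)⟫_𝕜 = 0 := by
      rw [inner_T, if_pos rfl, hi, RCLike.ofReal_zero, sq, zero_mul]
    rw [inner_self_eq_zero.mp inner_self, hi, RCLike.ofReal_zero, zero_smul]
  · rw [hu i hi, smul_inv_smul₀ (RCLike.ofReal_ne_zero.mpr hi)]

theorem sum_sqrt_singularValues_comp_le {a b : E →ₗ[𝕜] E} (ha : a.IsPositive)
    (hb : b.IsPositive) (hE : finrank 𝕜 E = n) :
    ∑ i : Fin n, √((a ∘ₗ b).singularValues i) ≤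
      √(re (a.trace 𝕜 E) * re (b.trace 𝕜 E)) := by
  obtain ⟨v, u, huv⟩ := exists_singular_value_decomposition (a ∘ₗ b) hE hE
  let α (x : E) : ℝ := re ⟪x, a x⟫_𝕜
  let β (x : E) : ℝ := re ⟪x, b x⟫_𝕜
  have hα (x) : 0 ≤ α x := ha.re_inner_nonneg_right x
  have hβ (x) : 0 ≤ β x := hb.re_inner_nonneg_right x
  have re_trace (c : E →ₗ[𝕜] E) (e : OrthonormalBasis (Fin n) 𝕜 E) :
      ∑ i, re ⟪e i, c (e i)⟫_𝕜 = re (c.trace 𝕜 E) := by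
    rw [c.trace_eq_sum_inner e, map_sum]
  have sum_β_le : ∑ i, √(β (u i)) * √(β (v i)) ≤ re (b.trace 𝕜 E) :=
    calc ∑ i, √(β (u i)) * √(β (v i)) ≤ √(∑ i, β (u i)) * √(∑ i, β (v i)) :=
        Real.sum_sqrt_mul_sqrt_le _ (fun i => hβ (u i)) fun i => hβ (v i)
      _ = re (b.trace 𝕜 E) := by
        rw [re_trace b u, re_trace b v,
          Real.mul_self_sqrt (RCLike.nonneg_iff.mp hb.trace_nonneg).1]
  calc ∑ i : Fin n, √((a ∘ₗ b).singularValues i)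
      ≤ ∑ i, √(α (u i)) * √(√(β (u i)) * √(β (v i))) := by
        gcongr with i
        rw [← Real.sqrt_mul (hα (u i))]
        exact Real.sqrt_le_sqrt <| le_re_inner_mul_sqrt_of_apply_apply_eq_smul ha hb
          (LinearMap.singularValues_nonneg _ i) (u.norm_eq_one i) (huv i)
    _ ≤ √(∑ i, α (u i)) * √(∑ i, √(β (u i)) * √(β (v i))) :=
        Real.sum_sqrt_mul_sqrt_le _ (fun i => hα (u i)) fun i => by positivity
    _ ≤ √(re (a.trace 𝕜 E)) * √(re (b.trace 𝕜 E)) := by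
        rw [re_trace a u]
        gcongr
    _ = √(re (a.trace 𝕜 E) * re (b.trace 𝕜 E)) :=
        (Real.sqrt_mul (RCLike.nonneg_iff.mp ha.trace_nonneg).1 _).symm

end PositiveOperators

section Matrices

open Matrix

variable {𝕜 m : Type*} [RCLike 𝕜] [Fintype m] [DecidableEq m]

theorem trace_toEuclideanLin (A : Matrix m m 𝕜) :
    A.toEuclideanLin.trace 𝕜 (EuclideanSpace 𝕜 m) = A.trace := by
  rw [toEuclideanLin_eq_toLin_orthonormal, trace_toLin_eq]

theorem sum_sqrt_singularValues_mul_le {A B : Matrix m m 𝕜} (hA : A.PosSemidef)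
    (hB : B.PosSemidef) :
    ∑ i : Fin (Fintype.card m), √((A * B).toEuclideanLin.singularValues i) ≤
      √(RCLike.re A.trace * RCLike.re B.trace) := by
  rw [← trace_toEuclideanLin A, ← trace_toEuclideanLin B,
    show (A * B).toEuclideanLin = A.toEuclideanLin ∘ₗ B.toEuclideanLin from toLpLin_mul_same 2 A B]
  exact sum_sqrt_singularValues_comp_le (isPositive_toEuclideanLin_iff.mpr hA)
    (isPositive_toEuclideanLin_iff.mpr hB) finrank_euclideanSpace

theorem trace_isHermitian_cfc {A : Matrix m m 𝕜} (hA : A.IsHermitian) (f : ℝ → ℝ) :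
    (hA.cfc f).trace = ∑ i, (f (hA.eigenvalues i) : 𝕜) := by
  rw [IsHermitian.cfc, Unitary.conjStarAlgAut_apply, trace_mul_comm, ← mul_assoc]
  simp [trace_diagonal]

theorem isHermitian_cfc {A : Matrix m m 𝕜} (hA : A.IsHermitian) (f : ℝ → ℝ) :
    (hA.cfc f).IsHermitian := by
  rw [← hA.cfc_eq]
  exact cfc_predicate f A

theorem isHermitian_cfc_cfc {A : Matrix m m 𝕜} (hA : A.IsHermitian) (f g : ℝ → ℝ) :
    (isHermitian_cfc hA f).cfc g = hA.cfc (g ∘ f) := by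
  rw [← (isHermitian_cfc hA f).cfc_eq, ← hA.cfc_eq, ← hA.cfc_eq]
  exact (cfc_comp g f A hA ((A.finite_real_spectrum.image f).continuousOn g)
    (A.finite_real_spectrum.continuousOn f)).symm

theorem sqrt_eigenvalues₀_conjTranspose_mul_self (Z : Matrix m m 𝕜) (i : Fin (Fintype.card m)) :
    √((posSemidef_conjTranspose_mul_self Z).isHermitian.eigenvalues₀ i) =
      Z.toEuclideanLin.singularValues i := by
  have toEuclideanLin_mul :
      (Zᴴ * Z).toEuclideanLin = Z.toEuclideanLin.adjoint ∘ₗ Z.toEuclideanLin := by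
    rw [← toEuclideanLin_conjTranspose_eq_adjoint]
    exact toLpLin_mul_same 2 Zᴴ Z
  rw [Z.toEuclideanLin.singularValues_fin finrank_euclideanSpace]
  simp only [IsHermitian.eigenvalues₀, toEuclideanLin_mul]

theorem trace_matRpow_matAbs {n : ℕ} (Z : Matrix (Fin n) (Fin n) ℂ) (r : ℝ) :
    (matRpow (matAbs Z) r).trace =
      ∑ i : Fin (Fintype.card (Fin n)), ((Z.toEuclideanLin.singularValues i ^ r : ℝ) : ℂ) := by
  have hZ := (posSemidef_conjTranspose_mul_self Z).isHermitian
  rw [matRpow, matAbs, dif_pos (isHermitian_cfc hZ Real.sqrt), isHermitian_cfc_cfc,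
    trace_isHermitian_cfc]
  simp only [← sqrt_eigenvalues₀_conjTranspose_mul_self]
  exact Equiv.sum_comp _ fun i => ((√(hZ.eigenvalues₀ i) ^ r : ℝ) : ℂ)

end Matrices

theorem ofReal_cpow_one_half {x : ℝ} (hx : 0 ≤ x) : (x : ℂ) ^ ((1 : ℂ) / 2) = (√x : ℝ) := by
  rw [Real.sqrt_eq_rpow, Complex.ofReal_cpow hx, Complex.ofReal_div, Complex.ofReal_one,
    Complex.ofReal_ofNat]

theorem sqrt_mul_le_half_add {a b : ℝ} (ha : 0 ≤ a) (hb : 0 ≤ b) :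
    √(a * b) ≤ 1 / 2 * (a + b) := by
  rw [Real.sqrt_le_left (by positivity)]
  linarith [sq_nonneg (a - b)]

/-- **Matrix arithmetic–geometric mean inequality in traces.** -/
theorem matrix_am_gm {n : ℕ} (A B : Matrix (Fin n) (Fin n) ℂ)
    (hA : A.PosSemidef) (hB : B.PosSemidef) :
    (matRpow (matAbs (A * B)) (1 / 2)).trace ≤ (A.trace * B.trace) ^ ((1 : ℂ) / 2) ∧
      (A.trace * B.trace) ^ ((1 : ℂ) / 2) ≤ (1 / 2 : ℂ) * (A.trace + B.trace) := by
  obtain ⟨α, hα, trace_A : (α : ℂ) = A.trace⟩ :=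
    RCLike.nonneg_iff_exists_ofReal.mp hA.trace_nonneg
  obtain ⟨β, hβ, trace_B : (β : ℂ) = B.trace⟩ :=
    RCLike.nonneg_iff_exists_ofReal.mp hB.trace_nonneg
  have sum_sqrt_le := sum_sqrt_singularValues_mul_le hA hB
  rw [← trace_A, ← trace_B] at sum_sqrt_le ⊢
  rw [trace_matRpow_matAbs, ← Complex.ofReal_mul, ofReal_cpow_one_half (mul_nonneg hα hβ)]
  simp only [← Real.sqrt_eq_rpow]
  exact ⟨by exact_mod_cast sum_sqrt_le,
    by simpa using Complex.real_le_real.mpr (sqrt_mul_le_half_add hα hβ)⟩
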